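/- Every class of languages that is Ex-learnable from informant by a locally conservative iterative learner is Ex-learnable from informant by a witness-based iterative learner; that is, [ItInfLocConvEx] ⊆ [ItInfWbEx]. -/

import Mathlib

/-- `W p` is the domain of the `p`-th partial computable function
(the `W`-hypothesis space for an acceptable numbering). -/
def W (p : ℕ) : Set ℕ := {n | ((Denumerable.ofNat Nat.Partrec.Code p).eval n).Dom}

/-- A labeled datum: a natural number together with a Boolean label. -/
abbrev Datum := ℕ × Bool

/-- The initial segment `I[t]` of an informant `I`, of length `t`. -/
def seg (I : ℕ → Datum) (t : ℕ) : List Datum := (List.range t).map I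

/-- The positively labeled numbers occurring in a finite sequence. -/
def posOf (σ : List Datum) : Set ℕ := {x | (x, true) ∈ σ}

/-- The negatively labeled numbers occurring in a finite sequence. -/
def negOf (σ : List Datum) : Set ℕ := {x | (x, false) ∈ σ}

/-- A finite sequence over ℕ × Bool is consistently labeled. -/
def ConsistentSeq (σ : List Datum) : Prop :=
  ∀ x b b', (x, b) ∈ σ → (x, b') ∈ σ → b = b'

/-- `I` is an informant for the language `L`. -/
def IsInformant (L : Set ℕ) (I : ℕ → Datum) : Prop :=
  (∀ t, ((I t).2 = true ↔ (I t).1 ∈ L)) ∧ Function.Surjective (fun t => (I t).1)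

/-- `M` Ex-learns `L` from the particular informant `I`. -/
def ExLearnsFrom (M : List Datum →. ℕ) (L : Set ℕ) (I : ℕ → Datum) : Prop :=
  ∃ t₀ e, W e = L ∧ ∀ t, t₀ ≤ t → M (seg I t) = Part.some e

/-- `M` Ex-learns `L` from informant. -/
def ExLearns (M : List Datum →. ℕ) (L : Set ℕ) : Prop :=
  ∀ I, IsInformant L I → ExLearnsFrom M L I

/-- `M` is an iterative learner: its value on `σ⌢x` is computed from its
value on `σ` and the datum `x` alone. -/
def Iterative (M : List Datum →. ℕ) : Prop :=
  ∃ h : ℕ × Datum →. ℕ, Partrec h ∧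
    ∀ σ x, M (σ ++ [x]) = (M σ).bind (fun e => h (e, x))

/-- `𝓛 ∈ [ItInfEx]`: some iterative partial computable learner
Ex-learns every member of `𝓛` from informant. -/
def ItInfEx (𝓛 : Set (Set ℕ)) : Prop :=
  ∃ M : List Datum →. ℕ, Partrec M ∧ Iterative M ∧ ∀ L ∈ 𝓛, ExLearns M L

/-- `M` is locally conservative on `I`: a mind change at time `t` only occurs when the
datum `I(t)` just seen is inconsistent with the current conjecture. -/
def LocConvOn (M : List Datum →. ℕ) (I : ℕ → Datum) : Prop :=
  ∀ t, ∀ e e', M (seg I t) = Part.some e → M (seg I (t + 1)) = Part.some e' → e ≠ e' →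
    ((I t).2 = true ∧ (I t).1 ∉ W e) ∨ ((I t).2 = false ∧ (I t).1 ∈ W e)

/-- `M` is witness-based on `I`: every mind change is witnessed by some false negative
or false positive datum. -/
def WbOn (M : List Datum →. ℕ) (I : ℕ → Datum) : Prop :=
  ∀ r s t, r < s → s ≤ t → ∀ er es et,
    M (seg I r) = Part.some er → M (seg I s) = Part.some es → M (seg I t) = Part.some et →
    er ≠ es →
    (posOf (seg I s) ∩ (W et \ W er)).Nonempty ∨
    (negOf (seg I s) ∩ (W er \ W et)).Nonempty

/-- `𝓛 ∈ [ItInfLocConvEx]`. -/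
def ItInfLocConvEx (𝓛 : Set (Set ℕ)) : Prop :=
  ∃ M : List Datum →. ℕ, Partrec M ∧ Iterative M ∧
    (∀ L ∈ 𝓛, ExLearns M L) ∧
    ∀ L ∈ 𝓛, ∀ I, IsInformant L I → LocConvOn M I

/-- `𝓛 ∈ [ItInfWbEx]`. -/
def ItInfWbEx (𝓛 : Set (Set ℕ)) : Prop :=
  ∃ M : List Datum →. ℕ, Partrec M ∧ Iterative M ∧
    (∀ L ∈ 𝓛, ExLearns M L) ∧
    ∀ L ∈ 𝓛, ∀ I, IsInformant L I → WbOn M I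

/-!
Let `h` be the update function of a locally conservative iterative learner `M`. The new learner
keeps, besides `M`'s conjecture `e`, the list `D` of all data that ever triggered a mind change,
ignores data already in `D`, and outputs an index of `(W e ∪ pos D) \ neg D`. These indices are
produced by an injective computable function, so the state `(e, D)` can be recovered from the
output and the new learner is iterative.

The data that are not ignored still form an informant for the target, and `M` runs on that informant
exactly as the new learner does. When the state changes from `(e, D)` on a datum `x`, local
conservativity says that `x` contradicts `W e`; as `x ∉ D`, it contradicts the patched conjecture
too. From then on `x` belongs to `D`, so all later conjectures agree with `x`: it is a witness.
-/

section Computability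

variable {α β σ : Type*} [Primcodable α] [Primcodable β] [Primcodable σ]

theorem partrec_ite {p : α → Prop} [DecidablePred p] {f g : α →. σ} (hp : ComputablePred p)
    (hf : Partrec f) (hg : Partrec g) : Partrec fun a => if p a then f a else g a :=
  (Partrec.cond hp.decide hf hg).of_eq fun a => by simp only [Bool.cond_decide]

theorem primrecRel_mem_list : PrimrecRel fun (a : α) (l : List α) => a ∈ l :=
  (Primrec.eq.exists_mem_list.comp Primrec.snd Primrec.fst).of_eq fun q => by
    simp only [exists_eq_right]

theorem exists_partrec_leftInverse {f : α → β} (hf : Computable f) (hinj : Function.Injective f) :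
    ∃ g : β →. α, Partrec g ∧ ∀ a, g (f a) = Part.some a := by
  classical
  let search (b : β) (n : ℕ) : Option α :=
    (Encodable.decode n).bind fun a => if f a = b then some a else none
  have mem_search {a a' : α} {n : ℕ} (h : a' ∈ search (f a) n) : a' = a := by
    obtain ⟨a'', -, h⟩ := Option.bind_eq_some_iff.1 h
    split_ifs at h with hfa
    exact (Option.some.inj h).symm.trans (hinj hfa)
  have search_computable : Computable₂ search := by
    refine Computable.option_bind (Computable.decode.comp Computable.snd) ?_
    have heq := (Primrec.eq (α := β)).decide.to_comp.comp
      (hf.comp Computable.snd) (Computable.fst.comp (Computable.fst (α := β × ℕ) (β := α)))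
    exact (Computable.cond heq (Computable.option_some.comp Computable.snd)
      (Computable.const none)).of_eq fun q => by simp only [Bool.cond_decide]
  refine ⟨fun b => Nat.rfindOpt (search b), Partrec.rfindOpt search_computable, fun a => ?_⟩
  have hdom : (Nat.rfindOpt (search (f a))).Dom :=
    Nat.rfindOpt_dom.2 ⟨Encodable.encode a, a, by simp [search]⟩
  obtain ⟨n, hn⟩ := Nat.rfindOpt_spec (Part.get_mem hdom)
  have hget : (Nat.rfindOpt (search (f a))).get hdom = a := mem_search hn
  exact Part.get_eq_iff_eq_some.1 hget

theorem exists_computable_injective_W_eq {A : α → Set ℕ}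
    (hA : REPred fun q : α × ℕ => q.2 ∈ A q.1) :
    ∃ g : α → ℕ, Computable g ∧ Function.Injective g ∧ ∀ a, W (g a) = A a := by
  obtain ⟨c, hc⟩ := Nat.Partrec.Code.exists_code.1 hA
  refine ⟨fun a => Encodable.encode (c.curry (Encodable.encode a)), ?_, fun a b hab => ?_,
    fun a => Set.ext fun n => ?_⟩
  · exact (Primrec.encode.comp <|
      Nat.Partrec.Code.primrec₂_curry.comp (Primrec.const c) Primrec.encode).to_comp
  · exact Encodable.encode_injective
      (Nat.Partrec.Code.curry_inj (Encodable.encode_injective hab)).2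
  · simp [W, Nat.Partrec.Code.eval_curry, hc, Part.assert]

end Computability

section PartFoldl

variable {α σ : Type*}

/-- Left fold of a partial transition function over a list. A learner is iterative precisely when it
is such a fold of a partial computable function. The initial state is itself partial because an
iterative learner may be undefined on the empty sequence. -/
def partFoldl (f : σ × α →. σ) (p : Part σ) (l : List α) : Part σ :=
  l.foldl (fun q x => q.bind fun s => f (s, x)) p

variable {f : σ × α →. σ} {p : Part σ}

theorem partFoldl_concat (l : List α) (x : α) :
    partFoldl f p (l ++ [x]) = (partFoldl f p l).bind fun s => f (s, x) := by
  simp only [partFoldl, List.foldl_append, List.foldl_cons, List.foldl_nil]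

theorem eq_partFoldl {M : List α →. σ}
    (hM : ∀ l x, M (l ++ [x]) = (M l).bind fun s => f (s, x)) : M = partFoldl f (M []) := by
  funext l
  induction l using List.reverseRecOn with
  | nil => rfl
  | append_singleton l x ih => rw [hM, ih, partFoldl_concat]

theorem partrec_partFoldl [Primcodable α] [Primcodable σ] (hf : Partrec f) (p : Part σ) :
    Partrec (partFoldl f p) := by
  let next (l : List α) (q : ℕ × σ) : Part σ := (l[q.1]? : Part α).bind fun x => f (q.2, x)
  have next_partrec : Partrec₂ next := by
    refine Partrec.bind (Computable.ofOption <|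
      Computable.list_getElem?.comp Computable.fst (Computable.fst.comp Computable.snd)) ?_
    exact hf.comp ((Computable.snd.comp (Computable.snd.comp Computable.fst)).pair Computable.snd)
  have rec_eq (l : List α) (k : ℕ) (hk : k ≤ l.length) :
      (Nat.rec p (fun i q => q.bind fun s => next l (i, s)) k : Part σ) =
        partFoldl f p (l.take k) := by
    induction k with
    | zero => rfl
    | succ k ih =>
      have hk' : k < l.length := hk
      rw [List.take_add_one, List.getElem?_eq_getElem hk', Option.toList_some, partFoldl_concat,
        ← ih hk'.le]
      simp [next, hk']
  refine (Partrec.nat_rec Computable.list_length (Partrec.const' p) next_partrec).of_eq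
    fun l => ?_
  rw [rec_eq l l.length le_rfl, List.take_length]

end PartFoldl

theorem iterative_map_partFoldl {σ : Type*} [Primcodable σ] {f : σ × Datum →. σ} (hf : Partrec f)
    {g : σ → ℕ} (hg : Computable g) (hinj : Function.Injective g) (p : Part σ) :
    Iterative fun l => (partFoldl f p l).map g := by
  obtain ⟨dec, hdec, dec_g⟩ := exists_partrec_leftInverse hg hinj
  refine ⟨fun q => (dec q.1).bind fun s => (f (s, q.2)).map g, ?_, fun l x => ?_⟩
  · refine (hdec.comp Computable.fst).bind (Partrec.map ?_ (hg.comp Computable.snd).to₂)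
    exact hf.comp (Computable.snd.pair (Computable.snd.comp Computable.fst))
  · simp only [partFoldl_concat, Part.map_bind, Part.bind_map, dec_g, Part.bind_some]

section Informants

theorem seg_succ (I : ℕ → Datum) (t : ℕ) : seg I (t + 1) = seg I t ++ [I t] := by
  simp only [seg, List.range_succ, List.map_append, List.map_cons, List.map_nil]

theorem mem_seg {I : ℕ → Datum} {t : ℕ} {x : Datum} : x ∈ seg I t ↔ ∃ u < t, I u = x := by
  simp only [seg, List.mem_map, List.mem_range]

/-- The label of the datum `x` is correct for the set `A`. -/
def Fits (x : Datum) (A : Set ℕ) : Prop := x.2 = true ↔ x.1 ∈ A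

theorem not_fits_iff {x : Datum} {A : Set ℕ} :
    ¬ Fits x A ↔ (x.2 = true ∧ x.1 ∉ A) ∨ (x.2 = false ∧ x.1 ∈ A) := by
  simp only [Fits, not_iff, ← Bool.not_eq_true]
  tauto

theorem IsInformant.fits_of_mem_seg {L : Set ℕ} {I : ℕ → Datum} (hI : IsInformant L I) {t : ℕ}
    {x : Datum} (hx : x ∈ seg I t) : Fits x L := by
  obtain ⟨u, -, rfl⟩ := mem_seg.1 hx
  exact hI.1 u

theorem IsInformant.comp {L : Set ℕ} {I : ℕ → Datum} (hI : IsInformant L I) {g : ℕ → ℕ}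
    (hg : Function.Surjective fun k => (I (g k)).1) : IsInformant L (I ∘ g) :=
  ⟨fun k => hI.1 (g k), hg⟩

theorem consistentSeq_of_fits {D : List Datum} {L : Set ℕ} (hD : ∀ x ∈ D, Fits x L) :
    ConsistentSeq D := fun _ _ _ hb hb' =>
  Bool.eq_iff_iff.2 ((hD _ hb).trans (hD _ hb').symm)

theorem nonempty_posOf_or_negOf_of_fits {x : Datum} {D : List Datum} {A B : Set ℕ} (hx : x ∈ D)
    (hA : ¬ Fits x A) (hB : Fits x B) :
    (posOf D ∩ (B \ A)).Nonempty ∨ (negOf D ∩ (A \ B)).Nonempty := by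
  obtain ⟨n, b⟩ := x
  rcases not_fits_iff.1 hA with ⟨rfl, hn⟩ | ⟨rfl, hn⟩
  · exact .inl ⟨n, hx, hB.1 rfl, hn⟩
  · exact .inr ⟨n, hx, hn, fun hnB => Bool.false_ne_true (hB.2 hnB)⟩

/-- The set `A`, corrected so as to agree with the data in `D`. -/
def patch (A : Set ℕ) (D : List Datum) : Set ℕ := (A ∪ posOf D) \ negOf D

theorem fits_patch {D : List Datum} (hD : ConsistentSeq D) {x : Datum} (hx : x ∈ D) (A : Set ℕ) :
    Fits x (patch A D) := by
  obtain ⟨n, _ | _⟩ := x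
  · exact iff_of_false Bool.false_ne_true fun hn => hn.2 hx
  · exact iff_of_true rfl ⟨.inr hx, fun hn => Bool.false_ne_true (hD n _ _ hn hx)⟩

theorem not_fits_patch {D : List Datum} {x : Datum} {A : Set ℕ} (hx : x ∉ D) (hA : ¬ Fits x A) :
    ¬ Fits x (patch A D) := by
  obtain ⟨n, b⟩ := x
  rcases not_fits_iff.1 hA with ⟨rfl, hn⟩ | ⟨rfl, hn⟩
  · exact not_fits_iff.2 (.inl ⟨rfl, fun h => h.1.elim hn hx⟩)
  · exact not_fits_iff.2 (.inr ⟨rfl, .inl hn, hx⟩)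

theorem patch_eq_self {A : Set ℕ} {D : List Datum} (hD : ∀ x ∈ D, Fits x A) : patch A D = A := by
  have hpos : posOf D ⊆ A := fun n hn => (hD _ hn).1 rfl
  have hneg : Disjoint A (negOf D) :=
    Set.disjoint_left.2 fun n hA hn => Bool.false_ne_true ((hD _ hn).2 hA)
  rw [patch, Set.union_eq_left.2 hpos, hneg.sdiff_eq_left]

theorem rePred_mem_patch :
    REPred fun q : (ℕ × List Datum) × ℕ => q.2 ∈ patch (W q.1.1) q.1.2 := by
  have computable_mem (b : Bool) :
      ComputablePred fun q : (ℕ × List Datum) × ℕ => (q.2, b) ∈ q.1.2 :=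
    (primrecRel_mem_list.comp (Primrec.snd.pair (Primrec.const b))
      (Primrec.snd.comp Primrec.fst)).computablePred
  have eval_partrec : Partrec fun q : (ℕ × List Datum) × ℕ =>
      (Denumerable.ofNat Nat.Partrec.Code q.1.1).eval q.2 :=
    Nat.Partrec.Code.eval_part.comp ((Computable.ofNat Nat.Partrec.Code).comp <|
      Computable.fst.comp Computable.fst) Computable.snd
  have hite := partrec_ite (computable_mem false) Partrec.none
    (partrec_ite (computable_mem true) (Computable.const 0).partrec eval_partrec)
  refine hite.dom_re.of_eq fun q => ?_
  by_cases hneg : (q.2, false) ∈ q.1.2 <;> by_cases hpos : (q.2, true) ∈ q.1.2 <;>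
    simp [patch, posOf, negOf, W, hneg, hpos]

end Informants

section PatchedLearner

/-- State of the learner constructed from a given one: a conjecture of the given learner, together
with the data that have triggered mind changes so far. -/
abbrev PatchState := ℕ × List Datum

/-- Transition of the constructed learner, where `h` is the update function of the given one. -/
def patchStep (h : ℕ × Datum →. ℕ) : PatchState × Datum →. PatchState := fun q =>
  if q.2 ∈ q.1.2 then Part.some q.1
  else (h (q.1.1, q.2)).map fun e => if e = q.1.1 then q.1 else (e, q.2 :: q.1.2)

theorem partrec_patchStep {h : ℕ × Datum →. ℕ} (hh : Partrec h) : Partrec (patchStep h) := by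
  have hmem : ComputablePred fun q : PatchState × Datum => q.2 ∈ q.1.2 :=
    (primrecRel_mem_list.comp Primrec.snd (Primrec.snd.comp Primrec.fst)).computablePred
  have hnext : Primrec₂ fun (q : PatchState × Datum) (e : ℕ) =>
      if e = q.1.1 then q.1 else (e, q.2 :: q.1.2) := by
    have hstate : Primrec fun z : (PatchState × Datum) × ℕ => z.1.1 :=
      Primrec.fst.comp Primrec.fst
    exact Primrec.ite (Primrec.eq.comp Primrec.snd (Primrec.fst.comp hstate)) hstate
      (Primrec.snd.pair (Primrec.list_cons.comp (Primrec.snd.comp Primrec.fst)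
        (Primrec.snd.comp hstate)))
  exact partrec_ite hmem Computable.fst.partrec
    ((hh.comp ((Computable.fst.comp Computable.fst).pair Computable.snd)).map hnext.to_comp)

variable {h : ℕ × Datum →. ℕ}

theorem patchStep_of_mem {s : PatchState} {x : Datum} (hx : x ∈ s.2) :
    patchStep h (s, x) = Part.some s := if_pos hx

theorem map_fst_patchStep_of_notMem {s : PatchState} {x : Datum} (hx : x ∉ s.2) :
    (patchStep h (s, x)).map Prod.fst = h (s.1, x) := by
  rw [patchStep, if_neg hx, Part.map_map]
  refine (congrArg (Part.map · _) (funext fun e => ?_)).trans (Part.map_id' (fun _ => rfl) _)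
  by_cases he : e = s.1 <;> simp [he]

theorem eq_or_of_mem_patchStep {s s' : PatchState} {x : Datum} (hs : s' ∈ patchStep h (s, x)) :
    s' = s ∨ x ∉ s.2 ∧ s'.1 ≠ s.1 ∧ s'.2 = x :: s.2 := by
  by_cases hx : x ∈ s.2
  · rw [patchStep_of_mem hx] at hs
    exact .inl (Part.mem_some_iff.1 hs)
  · rw [patchStep, if_neg hx] at hs
    obtain ⟨e, -, rfl⟩ := (Part.mem_map_iff _).1 hs
    by_cases he : e = s.1
    · exact .inl (if_pos he)
    · simpa [he] using Or.inr hx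

/-- The state of the constructed learner after the finite sequence `l`, where `p` is the output of
the given learner on the empty sequence. -/
def patchRun (h : ℕ × Datum →. ℕ) (p : Part ℕ) : List Datum →. PatchState :=
  partFoldl (patchStep h) (p.map fun e => (e, []))

variable {p : Part ℕ} {I : ℕ → Datum}

theorem patchRun_concat (l : List Datum) (x : Datum) :
    patchRun h p (l ++ [x]) = (patchRun h p l).bind fun s => patchStep h (s, x) :=
  partFoldl_concat l x

theorem mem_patchRun_concat {l : List Datum} {x : Datum} {s' : PatchState} :
    s' ∈ patchRun h p (l ++ [x]) ↔ ∃ s ∈ patchRun h p l, s' ∈ patchStep h (s, x) := by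
  rw [patchRun_concat, Part.mem_bind_iff]

theorem subset_of_mem_patchRun {l : List Datum} {s : PatchState} (hs : s ∈ patchRun h p l) :
    s.2 ⊆ l := by
  induction l using List.reverseRecOn generalizing s with
  | nil =>
    obtain ⟨e, -, rfl⟩ := (Part.mem_map_iff _).1 hs
    exact List.nil_subset _
  | append_singleton l x ih =>
    obtain ⟨s₀, hs₀, hstep⟩ := mem_patchRun_concat.1 hs
    have hl : s₀.2 ⊆ l ++ [x] := List.subset_append_of_subset_left _ (ih hs₀)
    rcases eq_or_of_mem_patchStep hstep with rfl | ⟨-, -, hcons⟩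
    · exact hl
    · rw [hcons]
      exact List.cons_subset.2 ⟨List.mem_concat_self, hl⟩

theorem mem_patchRun_seg_succ {t : ℕ} {s' : PatchState} :
    s' ∈ patchRun h p (seg I (t + 1)) ↔
      ∃ s ∈ patchRun h p (seg I t), s' ∈ patchStep h (s, I t) := by
  rw [seg_succ, mem_patchRun_concat]

theorem snd_subset_of_mem_patchRun_seg {r t : ℕ} (hrt : r ≤ t) {s s' : PatchState}
    (hs : s ∈ patchRun h p (seg I r)) (hs' : s' ∈ patchRun h p (seg I t)) : s.2 ⊆ s'.2 := by
  induction t, hrt using Nat.le_induction generalizing s' with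
  | base => rw [Part.mem_unique hs hs']; exact List.Subset.refl _
  | succ t _ ih =>
    obtain ⟨s₀, hs₀, hstep⟩ := mem_patchRun_seg_succ.1 hs'
    rcases eq_or_of_mem_patchStep hstep with rfl | ⟨-, -, hcons⟩
    · exact ih hs₀
    · exact hcons ▸ List.subset_cons_of_subset _ (ih hs₀)

theorem exists_change_of_ne {r t : ℕ} (hrt : r ≤ t) {s s' : PatchState}
    (hs : s ∈ patchRun h p (seg I r)) (hs' : s' ∈ patchRun h p (seg I t)) (hne : s ≠ s') :
    ∃ u < t, s ∈ patchRun h p (seg I u) ∧ ∃ s₁ ∈ patchRun h p (seg I (u + 1)), s₁ ≠ s := by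
  induction t, hrt using Nat.le_induction generalizing s' with
  | base => exact absurd (Part.mem_unique hs hs') hne
  | succ t _ ih =>
    obtain ⟨s₀, hs₀, -⟩ := mem_patchRun_seg_succ.1 hs'
    by_cases h₀ : s = s₀
    · exact ⟨t, t.lt_succ_self, h₀ ▸ hs₀, s', hs', hne.symm⟩
    · obtain ⟨u, hu, hsu⟩ := ih hs₀ h₀
      exact ⟨u, hu.trans t.lt_succ_self, hsu⟩

/-- The constructed learner does not ignore the datum at time `t`. If its state is undefined at time
`t`, this holds by convention. -/
def Processed (h : ℕ × Datum →. ℕ) (p : Part ℕ) (I : ℕ → Datum) (t : ℕ) : Prop :=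
  ∀ s ∈ patchRun h p (seg I t), I t ∉ s.2

/-- The informant obtained from `I` by deleting the data that the constructed learner ignores. The
given learner is simulated on it. -/
noncomputable def processedInformant (h : ℕ × Datum →. ℕ) (p : Part ℕ) (I : ℕ → Datum) :
    ℕ → Datum :=
  I ∘ Nat.nth (Processed h p I)

theorem exists_processed_of_surjective (hI : Function.Surjective fun t => (I t).1) (n : ℕ) :
    ∃ t, Processed h p I t ∧ (I t).1 = n := by
  classical
  refine ⟨Nat.find (hI n), fun s hs hmem => ?_, Nat.find_spec (hI n)⟩
  obtain ⟨u, hu, hueq⟩ := mem_seg.1 (subset_of_mem_patchRun hs hmem)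
  exact Nat.find_min (hI n) hu ((congrArg Prod.fst hueq).trans (Nat.find_spec (hI n)))

theorem infinite_processed (hI : Function.Surjective fun t => (I t).1) :
    {t | Processed h p I t}.Infinite :=
  .of_image (fun t => (I t).1) <| Set.infinite_univ.mono fun n _ =>
    exists_processed_of_surjective hI n

open Classical in
theorem processedInformant_count {t : ℕ} (ht : Processed h p I t) :
    processedInformant h p I (Nat.count (Processed h p I) t) = I t :=
  congrArg I (Nat.nth_count ht)

theorem IsInformant.processedInformant {L : Set ℕ} (hI : IsInformant L I) (h : ℕ × Datum →. ℕ)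
    (p : Part ℕ) : IsInformant L (processedInformant h p I) := by
  classical
  refine hI.comp fun n => ?_
  obtain ⟨t, ht, hn⟩ := exists_processed_of_surjective (h := h) (p := p) hI.2 n
  exact ⟨Nat.count (Processed h p I) t, (congrArg Prod.fst (processedInformant_count ht)).trans hn⟩

open Classical in
theorem map_fst_patchRun_seg (t : ℕ) :
    (patchRun h p (seg I t)).map Prod.fst =
      partFoldl h p (seg (processedInformant h p I) (Nat.count (Processed h p I) t)) := by
  induction t with
  | zero => exact (Part.map_map _ _ _).trans (Part.map_id' (fun _ => rfl) _)
  | succ t ih =>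
    rw [seg_succ, patchRun_concat, Part.map_bind]
    by_cases ht : Processed h p I t
    · rw [Nat.count_succ_eq_succ_count ht, seg_succ, partFoldl_concat, ← ih, Part.bind_map,
        processedInformant_count ht]
      ext e
      simp only [Part.mem_bind_iff]
      exact exists_congr fun s => and_congr_right fun hs => by
        rw [map_fst_patchStep_of_notMem (ht s hs)]
    · rw [Nat.count_succ_eq_count ht, ← ih]
      obtain ⟨s, hs, hmem⟩ : ∃ s ∈ patchRun h p (seg I t), I t ∈ s.2 := by
        simpa [Processed] using ht
      rw [Part.eq_some_iff.2 hs, Part.bind_some, patchStep_of_mem hmem]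

theorem new_datum_of_state_change
    (hM : LocConvOn (partFoldl h p) (processedInformant h p I)) {t : ℕ} {s s' : PatchState}
    (hs : s ∈ patchRun h p (seg I t)) (hs' : s' ∈ patchRun h p (seg I (t + 1))) (hne : s' ≠ s) :
    I t ∉ s.2 ∧ I t ∈ s'.2 ∧ ¬ Fits (I t) (W s.1) := by
  classical
  obtain ⟨s₀, hs₀, hstep⟩ := mem_patchRun_seg_succ.1 hs'
  obtain rfl := Part.mem_unique hs hs₀
  obtain ⟨hnew, hfst, hcons⟩ := (eq_or_of_mem_patchStep hstep).resolve_left hne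
  refine ⟨hnew, hcons ▸ List.mem_cons_self, not_fits_iff.2 ?_⟩
  have ht : Processed h p I t := fun s₁ hs₁ => Part.mem_unique hs hs₁ ▸ hnew
  have hbefore := map_fst_patchRun_seg (h := h) (p := p) (I := I) t
  have hafter := map_fst_patchRun_seg (h := h) (p := p) (I := I) (t + 1)
  rw [Part.eq_some_iff.2 hs, Part.map_some] at hbefore
  rw [Part.eq_some_iff.2 hs', Part.map_some, Nat.count_succ_eq_succ_count ht] at hafter
  simpa only [processedInformant_count ht] using hM _ _ _ hbefore.symm hafter.symm hfst.symm

theorem exists_patchRun_seg_eq_some {L : Set ℕ} (hI : Function.Surjective fun t => (I t).1)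
    (hM : ExLearnsFrom (partFoldl h p) L (processedInformant h p I)) :
    ∃ t₀ s, W s.1 = L ∧ ∀ t, t₀ ≤ t → patchRun h p (seg I t) = Part.some s := by
  classical
  obtain ⟨k, e, hW, hk⟩ := hM
  have exists_state (t : ℕ) (ht : Nat.nth (Processed h p I) k ≤ t) :
      ∃ s ∈ patchRun h p (seg I t), s.1 = e := by
    have hcount : k ≤ Nat.count (Processed h p I) t :=
      (Nat.count_nth_of_infinite (infinite_processed hI) k).ge.trans (Nat.count_monotone _ ht)
    exact (Part.mem_map_iff _).1
      (Part.eq_some_iff.1 ((map_fst_patchRun_seg t).trans (hk _ hcount)))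
  obtain ⟨s, hs, he⟩ := exists_state _ le_rfl
  refine ⟨Nat.nth (Processed h p I) k, s, he ▸ hW, fun t ht => Part.eq_some_iff.2 ?_⟩
  induction t, ht using Nat.le_induction with
  | base => exact hs
  | succ t ht ih =>
    obtain ⟨s', hs', he'⟩ := exists_state (t + 1) (ht.trans t.le_succ)
    obtain ⟨s₀, hs₀, hstep⟩ := mem_patchRun_seg_succ.1 hs'
    obtain rfl := Part.mem_unique ih hs₀
    rcases eq_or_of_mem_patchStep hstep with rfl | ⟨-, hfst, -⟩
    · exact hs'
    · exact absurd (he'.trans he.symm) hfst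

variable {g : PatchState → ℕ} {L : Set ℕ}

theorem exLearnsFrom_map_patchRun (hg : ∀ s, W (g s) = patch (W s.1) s.2) (hI : IsInformant L I)
    (hM : ExLearnsFrom (partFoldl h p) L (processedInformant h p I)) :
    ExLearnsFrom (fun l => (patchRun h p l).map g) L I := by
  obtain ⟨t₀, s, hW, hs⟩ := exists_patchRun_seg_eq_some hI.2 hM
  refine ⟨t₀, g s, ?_, fun t ht => by simp only [hs t ht, Part.map_some]⟩
  have hfits : ∀ x ∈ s.2, Fits x L := fun x hx =>
    hI.fits_of_mem_seg (subset_of_mem_patchRun (Part.eq_some_iff.1 (hs t₀ le_rfl)) hx)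
  rw [hg, hW, patch_eq_self hfits]

theorem wbOn_map_patchRun (hg : ∀ s, W (g s) = patch (W s.1) s.2) (hI : IsInformant L I)
    (hM : LocConvOn (partFoldl h p) (processedInformant h p I)) :
    WbOn (fun l => (patchRun h p l).map g) I := by
  intro r s t hrs hst er es et hr hs ht hne
  obtain ⟨qr, hqr, rfl⟩ := (Part.mem_map_iff _).1 (Part.eq_some_iff.1 hr)
  obtain ⟨qs, hqs, rfl⟩ := (Part.mem_map_iff _).1 (Part.eq_some_iff.1 hs)
  obtain ⟨qt, hqt, rfl⟩ := (Part.mem_map_iff _).1 (Part.eq_some_iff.1 ht)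
  obtain ⟨u, hus, hqu, q₁, hq₁, hq₁ne⟩ := exists_change_of_ne hrs.le hqr hqs (ne_of_apply_ne g hne)
  obtain ⟨hnew, hmem, hcontra⟩ := new_datum_of_state_change hM hqu hq₁ hq₁ne
  have hmem_qt : I u ∈ qt.2 :=
    snd_subset_of_mem_patchRun_seg (Nat.succ_le_of_lt (hus.trans_le hst)) hq₁ hqt hmem
  have hcons : ConsistentSeq qt.2 := consistentSeq_of_fits (L := L) fun x hx =>
    hI.fits_of_mem_seg (subset_of_mem_patchRun hqt hx)
  rw [hg, hg]
  exact nonempty_posOf_or_negOf_of_fits (mem_seg.2 ⟨u, hus, rfl⟩)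
    (not_fits_patch hnew hcontra) (fits_patch hcons hmem_qt _)

end PatchedLearner

/-- Every class learnable by a locally conservative iterative learner from informant is
learnable by a witness-based iterative learner: `[ItInfLocConvEx] ⊆ [ItInfWbEx]`. -/
theorem locConv_subset_wb (𝓛 : Set (Set ℕ)) (h : ItInfLocConvEx 𝓛) : ItInfWbEx 𝓛 := by
  obtain ⟨M, -, ⟨upd, hupd, hM⟩, hEx, hLC⟩ := h
  obtain ⟨p, rfl⟩ : ∃ p, M = partFoldl upd p := ⟨M [], eq_partFoldl hM⟩
  obtain ⟨g, g_computable, g_injective, hg⟩ := exists_computable_injective_W_eq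
    (A := fun s : PatchState => patch (W s.1) s.2) rePred_mem_patch
  have hstep : Partrec (patchStep upd) := partrec_patchStep hupd
  refine ⟨fun l => (patchRun upd p l).map g, ?_, ?_, fun L hL I hI => ?_, fun L hL I hI => ?_⟩
  · exact (partrec_partFoldl hstep _).map (g_computable.comp Computable.snd).to₂
  · exact iterative_map_partFoldl hstep g_computable g_injective _
  · exact exLearnsFrom_map_patchRun hg hI (hEx L hL _ (hI.processedInformant upd p))
  · exact wbOn_map_patchRun hg hI (hLC L hL _ (hI.processedInformant upd p))
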